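/- arXiv:2501.11305 — 3 statements merged into one kernel-verified Lean document; each statement's English description precedes it below -/
import Mathlib

section
/- Let L be an n×n real symmetric positive semidefinite matrix, k < n, and suppose λ_k < λ_{k+1}. If A ∈ ℝ^{n×k} satisfies the orthogonality constraint Aᵀ A = I_k and minimizes the Rayleigh quotient R_L(A) = Tr(Aᵀ L A) over all matrices in ℝ^{n×k} satisfying the orthogonality constraint, then there exists an orthogonal matrix Q ∈ ℝ^{k×k} (Qᵀ Q = I_k) such that A = V Q. -/
open Matrix

/-!
In the coordinates of the eigenbasis the competitor `A` becomes a matrix `C` with orthonormal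
columns, and `Tr(Aᵀ L A) = ∑ i, λ i * w i`, where `w i` is the squared norm of the `i`-th row of
`C`. These weights lie in `[0, 1]` and add up to `k`, so the gap forces a minimizer to put all the
weight on the `k` lowest eigenvalues. The remaining rows of `C` vanish, and the surviving `k × k`
block is the required orthogonal matrix.
-/

section Semiring

variable {ι κ μ ν R : Type*} [Fintype ι]

theorem mul_eq_submatrix_mul_submatrix_of_row_eq_zero [NonUnitalNonAssocSemiring R] [Fintype κ]
    (e : κ ↪ ι) (B : Matrix μ ι R) {C : Matrix ι ν R}
    (hC : ∀ i ∉ Set.range e, ∀ j, C i j = 0) :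
    B * C = B.submatrix id e * C.submatrix e id := by
  ext a b
  simp only [mul_apply, submatrix_apply, id]
  exact (Fintype.sum_of_injective e e.injective _ _
    (fun i hi => by rw [hC i hi b, mul_zero]) (fun _ => rfl)).symm

theorem trace_transpose_mul_diagonal_mul [CommSemiring R] [DecidableEq ι] [Fintype κ]
    (C : Matrix ι κ R) (d : ι → R) :
    trace (Cᵀ * diagonal d * C) = ∑ i, d i * ∑ j, C i j ^ 2 := by
  simp only [trace, diag_apply, mul_apply (M := Cᵀ * diagonal d), mul_diagonal, transpose_apply,
    Finset.mul_sum]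
  rw [Finset.sum_comm]
  exact Finset.sum_congr rfl fun i _ => Finset.sum_congr rfl fun j _ => by ring

theorem sum_sum_sq_eq_card_of_transpose_mul_self_eq_one [CommSemiring R] [Fintype κ]
    [DecidableEq κ] {C : Matrix ι κ R} (hC : Cᵀ * C = 1) :
    ∑ i, ∑ j, C i j ^ 2 = (Fintype.card κ : R) := by
  classical
  simpa [hC] using (trace_transpose_mul_diagonal_mul C 1).symm

theorem of_mul_transpose_of_eq_one [NonAssocSemiring R] [DecidableEq μ] {v : μ → ι → R}
    (hv : ∀ i j, v i ⬝ᵥ v j = if i = j then 1 else 0) :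
    of v * (of v)ᵀ = 1 := by
  ext i j
  rw [one_apply, ← hv i j]
  rfl

theorem of_mul_mul_transpose_of_eq_diagonal [CommSemiring R] [DecidableEq μ] {L : Matrix ι ι R}
    {lam : μ → R} {v : μ → ι → R} (heig : ∀ i, L *ᵥ v i = lam i • v i)
    (hv : ∀ i j, v i ⬝ᵥ v j = if i = j then 1 else 0) :
    of v * L * (of v)ᵀ = diagonal lam := by
  ext i j
  calc (of v * L * (of v)ᵀ) i j = v i ⬝ᵥ L *ᵥ v j := by rw [Matrix.mul_assoc]; rfl
    _ = diagonal lam i j := by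
      rw [heig, dotProduct_smul, hv, diagonal_apply]
      split_ifs with h <;> simp [h]

theorem submatrix_transpose_mul_self_eq_one [NonAssocSemiring R] [DecidableEq μ] [DecidableEq κ]
    (e : κ ↪ μ) {W : Matrix ι μ R} (hW : Wᵀ * W = 1) :
    (W.submatrix id e)ᵀ * W.submatrix id e = 1 := by
  rw [transpose_submatrix, ← submatrix_mul _ _ _ _ _ Function.bijective_id, hW,
    submatrix_one_embedding]

theorem trace_submatrix_transpose_mul_mul_eq_sum [NonUnitalNonAssocSemiring R] [DecidableEq μ]
    [Fintype κ] (e : κ → μ) {L : Matrix ι ι R} {W : Matrix ι μ R} {lam : μ → R}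
    (hL : Wᵀ * L * W = diagonal lam) :
    trace ((W.submatrix id e)ᵀ * L * W.submatrix id e) = ∑ j, lam (e j) :=
  calc trace ((W.submatrix id e)ᵀ * L * W.submatrix id e)
      = trace ((Wᵀ * L * W).submatrix e e) := rfl
    _ = ∑ j, lam (e j) := by simp only [hL, trace, diag_apply, submatrix_apply, diagonal_apply_eq]

end Semiring

section Ordered

variable {ι κ K : Type*} [Fintype ι] [CommRing K] [LinearOrder K] [IsStrictOrderedRing K]

theorem eq_zero_of_sum_mul_le_sum_of_le_of_lt {s : Finset ι} {lam w : ι → K}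
    {m : K} (hle : ∀ i ∈ s, lam i ≤ m) (hlt : ∀ i ∉ s, m < lam i)
    (hw0 : ∀ i, 0 ≤ w i) (hw1 : ∀ i, w i ≤ 1) (hw : ∑ i, w i = (s.card : K))
    (hsum : ∑ i, lam i * w i ≤ ∑ i ∈ s, lam i) :
    ∀ i ∉ s, w i = 0 := by
  classical
  -- Both `w` and the indicator of `s` have total mass `#s`, so shifting `lam` by `m` does not
  -- affect the comparison of the two weighted sums, but gives every term of the difference a sign.
  let χ : ι → K := fun i => if i ∈ s then 1 else 0
  have term_nonneg (i : ι) : 0 ≤ (lam i - m) * (w i - χ i) := by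
    by_cases hi : i ∈ s
    · simpa only [χ, if_pos hi] using
        mul_nonneg_of_nonpos_of_nonpos (sub_nonpos.2 (hle i hi)) (sub_nonpos.2 (hw1 i))
    · simpa only [χ, if_neg hi, sub_zero] using mul_nonneg (sub_nonneg.2 (hlt i hi).le) (hw0 i)
  have sum_nonpos : ∑ i, (lam i - m) * (w i - χ i) ≤ 0 :=
    calc ∑ i, (lam i - m) * (w i - χ i)
        = (∑ i, lam i * w i - ∑ i ∈ s, lam i) - m * (∑ i, w i - s.card) := by
          simp only [χ, mul_sub, sub_mul, mul_ite, mul_one, mul_zero, Finset.sum_sub_distrib,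
            ← Finset.mul_sum, Finset.sum_ite_mem, Finset.univ_inter, Finset.sum_const,
            nsmul_eq_mul]
          ring
      _ ≤ 0 := by rw [hw, sub_self, mul_zero, sub_zero]; exact sub_nonpos.2 hsum
  intro i hi
  have term_eq_zero : (lam i - m) * (w i - χ i) = 0 :=
    (Finset.sum_eq_zero_iff_of_nonneg fun i _ => term_nonneg i).1
      (sum_nonpos.antisymm (Finset.sum_nonneg fun i _ => term_nonneg i)) i (Finset.mem_univ i)
  simpa only [χ, if_neg hi, sub_zero] using
    (mul_eq_zero.1 term_eq_zero).resolve_left (sub_pos.2 (hlt i hi)).ne'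

theorem eq_zero_of_sum_mul_le_sum {s : Finset ι} {lam w : ι → K}
    (hgap : ∀ i ∈ s, ∀ j ∉ s, lam i < lam j)
    (hw0 : ∀ i, 0 ≤ w i) (hw1 : ∀ i, w i ≤ 1) (hw : ∑ i, w i = (s.card : K))
    (hsum : ∑ i, lam i * w i ≤ ∑ i ∈ s, lam i) :
    ∀ i ∉ s, w i = 0 := by
  rcases s.eq_empty_or_nonempty with rfl | hs
  · rw [Finset.card_empty, Nat.cast_zero] at hw
    exact fun i _ => (Finset.sum_eq_zero_iff_of_nonneg fun i _ => hw0 i).1 hw i (Finset.mem_univ i)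
  · obtain ⟨t, ht, hmax⟩ := s.exists_max_image lam hs
    exact eq_zero_of_sum_mul_le_sum_of_le_of_lt hmax (hgap t ht) hw0 hw1 hw hsum

variable [Fintype κ] [DecidableEq κ]

theorem sum_sq_row_le_one_of_transpose_mul_self_eq_one {C : Matrix ι κ K} (hC : Cᵀ * C = 1)
    (i : ι) : ∑ j, C i j ^ 2 ≤ 1 := by
  -- A diagonal entry `p` of the symmetric idempotent `C * Cᵀ` satisfies `p ^ 2 ≤ p`.
  set P := C * Cᵀ with hP
  have P_idem : P * P = P := by
    rw [hP, Matrix.mul_assoc, ← Matrix.mul_assoc Cᵀ, hC, Matrix.one_mul]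
  have P_symm : Pᵀ = P := by rw [hP, transpose_mul, transpose_transpose]
  have P_diag : P i i = ∑ j, C i j ^ 2 := by simp only [hP, mul_apply, transpose_apply, sq]
  have P_diag_eq : P i i = ∑ l, P i l ^ 2 := by
    conv_lhs => rw [← P_idem, mul_apply]
    exact Finset.sum_congr rfl fun l _ => by rw [← transpose_apply P i l, P_symm, sq]
  have sq_le : P i i ^ 2 ≤ P i i := by
    conv_rhs => rw [P_diag_eq]
    exact Finset.single_le_sum (f := fun l => P i l ^ 2) (fun l _ => sq_nonneg _)
      (Finset.mem_univ i)
  rw [← P_diag]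
  by_contra! one_lt
  nlinarith only [sq_le, one_lt]

theorem row_eq_zero_of_trace_diagonal_le [DecidableEq ι] (e : κ ↪ ι) {lam : ι → K}
    (hgap : ∀ j, ∀ i ∉ Set.range e, lam (e j) < lam i)
    {C : Matrix ι κ K} (hC : Cᵀ * C = 1)
    (htrace : trace (Cᵀ * diagonal lam * C) ≤ ∑ j, lam (e j)) :
    ∀ i ∉ Set.range e, ∀ j, C i j = 0 := by
  intro i hi j
  have row_eq_zero : ∑ j, C i j ^ 2 = 0 :=
    eq_zero_of_sum_mul_le_sum (s := Finset.univ.map e) (lam := lam)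
      (w := fun i => ∑ j, C i j ^ 2) (by simpa using hgap)
      (fun i => Finset.sum_nonneg fun j _ => sq_nonneg _)
      (sum_sq_row_le_one_of_transpose_mul_self_eq_one hC)
      (by simpa using sum_sum_sq_eq_card_of_transpose_mul_self_eq_one hC)
      (by simpa [trace_transpose_mul_diagonal_mul] using htrace) i (by simpa using hi)
  exact pow_eq_zero_iff two_ne_zero |>.1 <|
    (Finset.sum_eq_zero_iff_of_nonneg fun j _ => sq_nonneg (C i j)).1 row_eq_zero j
      (Finset.mem_univ j)

theorem exists_orthogonal_eq_submatrix_mul_of_trace_le [DecidableEq ι] (e : κ ↪ ι)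
    {L W : Matrix ι ι K} {lam : ι → K} (hW : Wᵀ * W = 1) (hL : Wᵀ * L * W = diagonal lam)
    (hgap : ∀ j, ∀ i ∉ Set.range e, lam (e j) < lam i)
    {A : Matrix ι κ K} (hA : Aᵀ * A = 1) (htrace : trace (Aᵀ * L * A) ≤ ∑ j, lam (e j)) :
    ∃ Q : Matrix κ κ K, Qᵀ * Q = 1 ∧ A = W.submatrix id e * Q := by
  obtain ⟨C, rfl⟩ : ∃ C, A = W * C :=
    ⟨Wᵀ * A, by rw [← Matrix.mul_assoc, mul_eq_one_comm.1 hW, Matrix.one_mul]⟩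
  have hC : Cᵀ * C = 1 := by
    rw [← hA, transpose_mul, Matrix.mul_assoc, ← Matrix.mul_assoc Wᵀ, hW, Matrix.one_mul]
  have trace_eq : trace ((W * C)ᵀ * L * (W * C)) = trace (Cᵀ * diagonal lam * C) := by
    simp only [← hL, transpose_mul, Matrix.mul_assoc]
  have rows := row_eq_zero_of_trace_diagonal_le e hgap hC (trace_eq ▸ htrace)
  refine ⟨C.submatrix e id, ?_, mul_eq_submatrix_mul_submatrix_of_row_eq_zero e W rows⟩
  rw [← hC, mul_eq_submatrix_mul_submatrix_of_row_eq_zero e Cᵀ rows, transpose_submatrix]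

end Ordered

theorem apply_castLE_lt_of_notMem_range_castLE {α : Type*} [Preorder α] {n k : ℕ} (hk : k < n)
    {lam : Fin n → α} (hmono : Monotone lam) (hgap : lam ⟨k - 1, by omega⟩ < lam ⟨k, hk⟩)
    (j : Fin k) (i : Fin n) (hi : i ∉ Set.range (Fin.castLE hk.le)) :
    lam (Fin.castLE hk.le j) < lam i := by
  have hki : k ≤ i := by simpa [Fin.range_castLE] using hi
  calc lam (Fin.castLE hk.le j) ≤ lam ⟨k - 1, by omega⟩ :=
        hmono (Fin.mk_le_mk.2 (Nat.le_sub_one_of_lt j.isLt))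
    _ < lam ⟨k, hk⟩ := hgap
    _ ≤ lam i := hmono (Fin.mk_le_mk.2 hki)

theorem rayleigh_minimizer_eq_eigenbasis_mul_orthogonal_general
    {ι κ K : Type*} [Fintype ι] [DecidableEq ι] [Fintype κ] [DecidableEq κ]
    [CommRing K] [LinearOrder K] [IsStrictOrderedRing K] (e : κ ↪ ι)
    (L : Matrix ι ι K) (lam : ι → K) (v : ι → ι → K)
    (heig : ∀ i, L *ᵥ v i = lam i • v i)
    (horth : ∀ i j, v i ⬝ᵥ v j = if i = j then (1 : K) else 0)
    (hgap : ∀ j, ∀ i ∉ Set.range e, lam (e j) < lam i)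
    (A : Matrix ι κ K) (hA : Aᵀ * A = 1)
    (hmin : ∀ B : Matrix ι κ K, Bᵀ * B = 1 → trace (Aᵀ * L * A) ≤ trace (Bᵀ * L * B)) :
    ∃ Q : Matrix κ κ K, Qᵀ * Q = 1 ∧ A = (of fun i j => v (e j) i) * Q := by
  have hW : (of v)ᵀᵀ * (of v)ᵀ = 1 := of_mul_transpose_of_eq_one horth
  have hL : (of v)ᵀᵀ * L * (of v)ᵀ = diagonal lam := of_mul_mul_transpose_of_eq_diagonal heig horth
  have htrace : trace (Aᵀ * L * A) ≤ ∑ j, lam (e j) :=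
    (hmin _ (submatrix_transpose_mul_self_eq_one e hW)).trans_eq
      (trace_submatrix_transpose_mul_mul_eq_sum e hL)
  exact exists_orthogonal_eq_submatrix_mul_of_trace_le e hW hL hgap hA htrace

/-- Any minimizer of the Rayleigh quotient `Tr(Aᵀ L A)` over matrices with
orthonormal columns, for a real symmetric PSD matrix `L` with eigenvalue gap
`λ_k < λ_{k+1}`, is of the form `V Q` with `Q` orthogonal, where `V` holds the
first `k` orthonormal eigenvectors as columns. -/
theorem rayleigh_minimizer_eq_eigenbasis_mul_orthogonal
    {n k : ℕ} (hk : k < n) (hk0 : 0 < k)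
    (L : Matrix (Fin n) (Fin n) ℝ) (hL : L.PosSemidef)
    (lam : Fin n → ℝ) (hmono : Monotone lam)
    (v : Fin n → Fin n → ℝ)
    (heig : ∀ i, L.mulVec (v i) = lam i • v i)
    (horth : ∀ i j, v i ⬝ᵥ v j = if i = j then (1 : ℝ) else 0)
    (hgap : lam ⟨k - 1, by omega⟩ < lam ⟨k, hk⟩)
    (A : Matrix (Fin n) (Fin k) ℝ)
    (hA : Aᵀ * A = 1)
    (hmin : ∀ B : Matrix (Fin n) (Fin k) ℝ, Bᵀ * B = 1 →
      Matrix.trace (Aᵀ * L * A) ≤ Matrix.trace (Bᵀ * L * B)) :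
    ∃ Q : Matrix (Fin k) (Fin k) ℝ, Qᵀ * Q = 1 ∧
      A = (Matrix.of fun i j => v (Fin.castLE hk.le j) i) * Q := by
  exact rayleigh_minimizer_eq_eigenbasis_mul_orthogonal_general (Fin.castLEEmb hk.le) L lam v heig
    horth (apply_castLE_lt_of_notMem_range_castLE hk hmono hgap) A hA hmin
end

section
/- Let L be an n×n real symmetric matrix, k < n, and suppose λ_k < λ_{k+1}. If B ∈ ℝ^{n×k} satisfies Bᵀ B = I_k and Tr(Bᵀ L B) = λ_1 + λ_2 + ⋯ + λ_k, then the column space of B equals the span of v_1, …, v_k; equivalently, B = V Q' for some orthogonal matrix Q' ∈ ℝ^{k×k}. -/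
open Matrix

/-!
In the eigenbasis, `B` becomes a matrix `C` with orthonormal columns, and `Tr(Bᴴ L B) = ∑ λ_i p_i`,
where `p_i` is the squared norm of the `i`-th row of `C`. These weights lie in `[0, 1]` and add up
to `k`. Since a gap separates the `k` smallest eigenvalues from the rest, the weighted sum can be as
small as `λ_1 + ⋯ + λ_k` only if no weight is spent above the gap. So the corresponding rows of `C`
vanish, and the remaining `k × k` block of `C` is the required unitary matrix.
-/

theorem weight_eq_zero_of_sum_mul_le {ι R : Type*} [Fintype ι] [Field R] [LinearOrder R]
    [IsStrictOrderedRing R] {s : Finset ι} {f p : ι → R}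
    (hgap : ∀ i ∈ s, ∀ j ∉ s, f i < f j) (hp_le : ∀ i ∈ s, p i ≤ 1) (hp_nonneg : ∀ j ∉ s, 0 ≤ p j)
    (hp_sum : ∑ i, p i = s.card) (hfp : ∑ i, f i * p i ≤ ∑ i ∈ s, f i) :
    ∀ j ∉ s, p j = 0 := by
  classical
  obtain ⟨a, hlt, hgt⟩ : ∃ a, (∀ i ∈ s, f i < a) ∧ ∀ j ∉ s, a < f j := by
    simpa using Order.exists_between_finsets (s.image f) (sᶜ.image f) (by simpa using hgap)
  have hterm : ∀ j ∈ sᶜ, 0 ≤ (f j - a) * p j := fun j hj =>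
    mul_nonneg (sub_nonneg.2 (hgt j (Finset.mem_compl.1 hj)).le)
      (hp_nonneg j (Finset.mem_compl.1 hj))
  have htotal : ∑ i, (f i - a) * p i ≤ ∑ i ∈ s, (f i - a) := by
    simp only [sub_mul, Finset.sum_sub_distrib, ← Finset.mul_sum, hp_sum, Finset.sum_const,
      nsmul_eq_mul, mul_comm _ a]
    gcongr
  have hcompl : ∑ j ∈ sᶜ, (f j - a) * p j ≤ 0 := calc
    ∑ j ∈ sᶜ, (f j - a) * p j = ∑ i, (f i - a) * p i - ∑ i ∈ s, (f i - a) * p i := by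
      rw [← Finset.sum_add_sum_compl s, add_sub_cancel_left]
    _ ≤ ∑ i ∈ s, (f i - a) - ∑ i ∈ s, (f i - a) * p i := by gcongr
    _ = ∑ i ∈ s, (f i - a) * (1 - p i) := by simp only [mul_one_sub, Finset.sum_sub_distrib]
    _ ≤ 0 := Finset.sum_nonpos fun i hi =>
      mul_nonpos_of_nonpos_of_nonneg (sub_nonpos.2 (hlt i hi).le) (sub_nonneg.2 (hp_le i hi))
  intro j hj
  have hzero : (f j - a) * p j = 0 :=
    (Finset.sum_eq_zero_iff_of_nonneg hterm).1 (hcompl.antisymm (Finset.sum_nonneg hterm)) j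
      (Finset.mem_compl.2 hj)
  exact (mul_eq_zero.1 hzero).resolve_left (sub_pos.2 (hgt j hj)).ne'

section MatrixProduct

variable {l m κ ι R : Type*} [Fintype m] [Fintype κ]

theorem mul_eq_submatrix_mul_submatrix [NonUnitalNonAssocSemiring R] {e : κ → m}
    (he : Function.Injective e) (A : Matrix l m R) {C : Matrix m ι R}
    (hC : ∀ i ∉ Set.range e, C i = 0) :
    A * C = A.submatrix id e * C.submatrix e id := by
  ext i j
  exact (Fintype.sum_of_injective e he _ (fun x => A i x * C x j)
    (fun x hx => by simp [hC x hx]) fun _ => rfl).symm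

theorem span_range_col_mul_of_isUnit [CommRing R] [DecidableEq κ] (A : Matrix l κ R)
    {Q : Matrix κ κ R} (hQ : IsUnit Q) :
    Submodule.span R (Set.range (A * Q).col) = Submodule.span R (Set.range A.col) := by
  have hsurj : LinearMap.range Q.mulVecLin = ⊤ :=
    LinearMap.range_eq_top.2 (mulVec_surjective_iff_isUnit.2 hQ)
  rw [← range_mulVecLin, ← range_mulVecLin, mulVecLin_mul,
    LinearMap.range_comp_of_range_eq_top _ hsurj]

end MatrixProduct

section OrthonormalColumns

variable {𝕜 m κ : Type*} [RCLike 𝕜] [Fintype κ]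

theorem mul_conjTranspose_apply_self (C : Matrix m κ 𝕜) (i : m) :
    (C * Cᴴ) i i = ((∑ j, ‖C i j‖ ^ 2 : ℝ) : 𝕜) := by
  simp [mul_apply, RCLike.mul_conj]

variable [Fintype m]

theorem trace_conjTranspose_mul_diagonal_mul [DecidableEq m] (d : m → ℝ) (C : Matrix m κ 𝕜) :
    trace (Cᴴ * diagonal (fun i => (d i : 𝕜)) * C) =
      ((∑ i, d i * ∑ j, ‖C i j‖ ^ 2 : ℝ) : 𝕜) := by
  rw [Matrix.mul_assoc, trace_mul_comm, Matrix.mul_assoc]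
  simp only [trace, diag_apply, diagonal_mul, mul_conjTranspose_apply_self, RCLike.ofReal_sum,
    RCLike.ofReal_mul]

variable [DecidableEq κ] {C : Matrix m κ 𝕜}

theorem sum_sum_norm_sq_eq_card (hC : Cᴴ * C = 1) :
    ∑ i, ∑ j, ‖C i j‖ ^ 2 = (Fintype.card κ : ℝ) := by
  have htrace : trace (C * Cᴴ) = (Fintype.card κ : 𝕜) := by
    rw [trace_mul_comm, hC, trace_one]
  simp only [trace, diag_apply, mul_conjTranspose_apply_self] at htrace
  exact_mod_cast htrace

open scoped ComplexOrder in
theorem sum_norm_sq_row_le_one (hC : Cᴴ * C = 1) (i : m) : ∑ j, ‖C i j‖ ^ 2 ≤ 1 := by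
  classical
  have hproj : (1 - C * Cᴴ)ᴴ * (1 - C * Cᴴ) = 1 - C * Cᴴ := by
    have hidem : C * Cᴴ * (C * Cᴴ) = C * Cᴴ := by
      rw [Matrix.mul_assoc, ← Matrix.mul_assoc Cᴴ, hC, Matrix.one_mul]
    simp [Matrix.mul_sub, Matrix.sub_mul, hidem]
  have hdiag : 0 ≤ (1 - C * Cᴴ : Matrix m m 𝕜) i i :=
    (hproj ▸ posSemidef_conjTranspose_mul_self (1 - C * Cᴴ)).diag_nonneg
  rw [Matrix.sub_apply, one_apply_eq, mul_conjTranspose_apply_self, sub_nonneg] at hdiag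
  exact_mod_cast hdiag

theorem row_eq_zero_of_trace_diagonal_eq [DecidableEq m] (hC : Cᴴ * C = 1) {s : Finset m}
    (hs : s.card = Fintype.card κ) {d : m → ℝ} (hgap : ∀ i ∈ s, ∀ j ∉ s, d i < d j)
    (htr : trace (Cᴴ * diagonal (fun i => (d i : 𝕜)) * C) = ((∑ i ∈ s, d i : ℝ) : 𝕜)) :
    ∀ i ∉ s, C i = 0 := by
  rw [trace_conjTranspose_mul_diagonal_mul, RCLike.ofReal_inj] at htr
  intro i hi
  have hrow : ∑ j, ‖C i j‖ ^ 2 = 0 :=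
    weight_eq_zero_of_sum_mul_le hgap (fun i _ => sum_norm_sq_row_le_one hC i)
      (fun i _ => by positivity) (by rw [sum_sum_norm_sq_eq_card hC, hs]) htr.le i hi
  ext j
  simpa using (Finset.sum_eq_zero_iff_of_nonneg fun j _ => sq_nonneg ‖C i j‖).1 hrow j

theorem exists_eq_submatrix_mul_of_trace_eq [DecidableEq m] {L W : Matrix m m 𝕜} {d : m → ℝ}
    (hW : W ∈ unitaryGroup m 𝕜) (hLW : L * W = W * diagonal fun i => (d i : 𝕜))
    {e : κ → m} (he : Function.Injective e) (hgap : ∀ j, ∀ i ∉ Set.range e, d (e j) < d i)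
    {B : Matrix m κ 𝕜} (hB : Bᴴ * B = 1)
    (htr : trace (Bᴴ * L * B) = ((∑ j, d (e j) : ℝ) : 𝕜)) :
    ∃ Q : Matrix κ κ 𝕜, Qᴴ * Q = 1 ∧ B = W.submatrix id e * Q := by
  obtain ⟨C, rfl⟩ : ∃ C, B = W * C :=
    ⟨Wᴴ * B, by rw [← Matrix.mul_assoc, ← star_eq_conjTranspose, mem_unitaryGroup_iff.1 hW,
      Matrix.one_mul]⟩
  have hWW : Wᴴ * W = 1 := mem_unitaryGroup_iff'.1 hW
  have hcancel (X : Matrix m κ 𝕜) : (W * C)ᴴ * (W * X) = Cᴴ * X := by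
    rw [conjTranspose_mul, Matrix.mul_assoc, ← Matrix.mul_assoc Wᴴ, hWW, Matrix.one_mul]
  have hC : Cᴴ * C = 1 := by rw [← hcancel, hB]
  have hdiag : (W * C)ᴴ * L * (W * C) = Cᴴ * diagonal (fun i => (d i : 𝕜)) * C := by
    rw [Matrix.mul_assoc, ← Matrix.mul_assoc L, hLW, Matrix.mul_assoc W, hcancel,
      Matrix.mul_assoc]
  have hrows : ∀ i ∉ Set.range e, C i = 0 := by
    simpa using row_eq_zero_of_trace_diagonal_eq hC (s := Finset.univ.map ⟨e, he⟩) (by simp)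
      (by simpa using hgap) (by rw [← hdiag, htr, Finset.sum_map]; rfl)
  refine ⟨C.submatrix e id, ?_, mul_eq_submatrix_mul_submatrix he W hrows⟩
  rw [conjTranspose_submatrix, ← mul_eq_submatrix_mul_submatrix he Cᴴ hrows, hC]

end OrthonormalColumns

theorem ky_fan_equality_case_general
    {𝕜 m κ : Type*} [RCLike 𝕜] [Fintype m] [DecidableEq m] [Fintype κ] [DecidableEq κ]
    {L : Matrix m m 𝕜} {lam : m → ℝ} {v : m → m → 𝕜}
    (heig : ∀ i, L *ᵥ v i = (lam i : 𝕜) • v i)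
    (horth : ∀ i j, star (v i) ⬝ᵥ v j = if i = j then 1 else 0)
    {e : κ → m} (he : Function.Injective e)
    (hgap : ∀ j, ∀ i ∉ Set.range e, lam (e j) < lam i)
    {B : Matrix m κ 𝕜} (hB : Bᴴ * B = 1)
    (htr : trace (Bᴴ * L * B) = ((∑ j, lam (e j) : ℝ) : 𝕜)) :
    Submodule.span 𝕜 (Set.range B.col) = Submodule.span 𝕜 (Set.range fun j => v (e j)) ∧
    ∃ Q : Matrix κ κ 𝕜, Qᴴ * Q = 1 ∧ B = (Matrix.of fun i j => v (e j) i) * Q := by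
  have hunitary : (Matrix.of v)ᵀ ∈ unitaryGroup m 𝕜 :=
    mem_unitaryGroup_iff'.2 (by ext i j; exact (horth i j).trans (one_apply ..).symm)
  have hdiagonalize : L * (Matrix.of v)ᵀ = (Matrix.of v)ᵀ * diagonal fun i => (lam i : 𝕜) := by
    ext i j
    rw [mul_diagonal, mul_comm]
    exact congrFun (heig j) i
  obtain ⟨Q, hQ, rfl⟩ := exists_eq_submatrix_mul_of_trace_eq hunitary hdiagonalize he hgap hB htr
  exact ⟨span_range_col_mul_of_isUnit _ (.of_mul_eq_one_right _ hQ), Q, hQ, rfl⟩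

theorem lt_of_notMem_range_castLE {α : Type*} [Preorder α] {n k : ℕ} {f : Fin n → α}
    (hf : Monotone f) (hk : k < n) (hgap : f ⟨k - 1, by omega⟩ < f ⟨k, hk⟩) (j : Fin k) {i : Fin n}
    (hi : i ∉ Set.range (Fin.castLE hk.le)) : f (Fin.castLE hk.le j) < f i := by
  have hki : k ≤ i := by simpa using hi
  calc
    f (Fin.castLE hk.le j) ≤ f ⟨k - 1, by omega⟩ := hf (Nat.le_sub_one_of_lt j.isLt)
    _ < f ⟨k, hk⟩ := hgap
    _ ≤ f i := hf hki

/-- Equality case of the Ky Fan minimum principle. If `λ_k < λ_{k+1}`,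
`B` has orthonormal columns and `Tr(Bᵀ L B) = λ_1 + ⋯ + λ_k`, then the column space of
`B` is the span of `v_1, …, v_k`; equivalently `B = V Q'` for some orthogonal `Q'`. -/
theorem ky_fan_equality_case
    {n k : ℕ} (hk : k < n) (hk0 : 0 < k)
    (L : Matrix (Fin n) (Fin n) ℝ) (hL : L.IsSymm)
    (lam : Fin n → ℝ) (hmono : Monotone lam)
    (v : Fin n → Fin n → ℝ)
    (heig : ∀ i, L.mulVec (v i) = lam i • v i)
    (horth : ∀ i j, v i ⬝ᵥ v j = if i = j then (1 : ℝ) else 0)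
    (hgap : lam ⟨k - 1, by omega⟩ < lam ⟨k, hk⟩)
    (B : Matrix (Fin n) (Fin k) ℝ) (hB : Bᵀ * B = 1)
    (htr : Matrix.trace (Bᵀ * L * B) = ∑ j : Fin k, lam (Fin.castLE hk.le j)) :
    Submodule.span ℝ (Set.range fun j : Fin k => fun i => B i j) =
      Submodule.span ℝ (Set.range fun j : Fin k => v (Fin.castLE hk.le j)) ∧
    ∃ Q' : Matrix (Fin k) (Fin k) ℝ, Q'ᵀ * Q' = 1 ∧
      B = (Matrix.of fun i j => v (Fin.castLE hk.le j) i) * Q' := by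
  exact ky_fan_equality_case_general heig horth (Fin.castLE_injective hk.le)
    (fun j _ => lt_of_notMem_range_castLE hmono hk hgap j) hB htr
end

section
/- Let L be an n×n real symmetric matrix, k < n, and suppose λ_k < λ_{k+1}. If A ∈ ℝ^{n×k} satisfies Aᵀ A = I_k and Tr(Aᵀ L A) = λ_1 + λ_2 + ⋯ + λ_k, and d_1 ≤ d_2 ≤ ⋯ ≤ d_k are the eigenvalues of the k×k symmetric matrix Aᵀ L A, then d_i = λ_i for every i = 1, …, k. -/
open Matrix Polynomial

/-!
Work in an orthonormal eigenbasis of `L` and in one of the compression, so that the compression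
becomes a matrix `W` with orthonormal columns and `Wᴴ diag(λ) W = diag(d)`. By counting dimensions
there is a nonzero `c` in the span of the first `i` coordinate vectors such that the first `i - 1`
entries of `W c` vanish; comparing the two expressions for the quadratic form at `c` gives
`λ_i ≤ d_i`. The trace hypothesis says that these inequalities add up to an equality, so each of
them is an equality.
-/

theorem exists_ne_zero_supported_mulVec_eq_zero {K m ι : Type*} [Field K] [Fintype ι]
    (W : Matrix m ι K) {s : Finset ι} {t : Finset m} (hcard : t.card < s.card) :
    ∃ c : ι → K, c ≠ 0 ∧ (∀ j ∉ s, c j = 0) ∧ ∀ l ∈ t, (W *ᵥ c) l = 0 := by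
  classical
  let extend : (s → K) →ₗ[K] (ι → K) := Function.ExtendByZero.linearMap K Subtype.val
  let restrict : (m → K) →ₗ[K] (t → K) := LinearMap.funLeft K K Subtype.val
  have hker : (restrict ∘ₗ W.mulVecLin ∘ₗ extend).ker ≠ ⊥ :=
    LinearMap.ker_ne_bot_of_finrank_lt (by simpa using hcard)
  obtain ⟨x, hx, hx0⟩ := Submodule.exists_mem_ne_zero_of_ne_bot hker
  refine ⟨extend x, fun h => hx0 ?_, fun j hj => ?_, fun l hl => congrFun hx ⟨l, hl⟩⟩
  · ext j
    simpa [extend, Subtype.val_injective.extend_apply] using congrFun h j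
  · exact Function.extend_apply' _ _ _ fun ⟨i, hi⟩ => hj (hi ▸ i.2)

theorem trace_eq_sum_of_charpoly_eq_prod {R ι : Type*} [CommRing R] [Fintype ι] [DecidableEq ι]
    {B : Matrix ι ι R} {d : ι → R} (hB : B.charpoly = ∏ i, (X - C (d i))) :
    B.trace = ∑ i, d i := by
  rw [← trace_diagonal d, trace_eq_neg_charpoly_nextCoeff, hB, ← charpoly_diagonal,
    ← trace_eq_neg_charpoly_nextCoeff]

theorem isHermitian_diagonal_ofReal {𝕜 ι : Type*} [RCLike 𝕜] [DecidableEq ι] (d : ι → ℝ) :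
    (diagonal fun i => (d i : 𝕜)).IsHermitian :=
  isHermitian_diagonal_of_self_adjoint _ (funext fun i => RCLike.conj_ofReal (d i))

section UnitaryDiagonalization

variable {ι : Type*} [Fintype ι] [DecidableEq ι]

theorem exists_unitary_eq_mul_diagonal_mul_star {R : Type*} [CommRing R] [StarRing R]
    {L : Matrix ι ι R} {lam : ι → R} {v : ι → ι → R}
    (heig : ∀ i, L *ᵥ v i = lam i • v i)
    (horth : ∀ i j, star (v i) ⬝ᵥ v j = if i = j then 1 else 0) :
    ∃ P ∈ unitaryGroup ι R, L = P * diagonal lam * star P := by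
  let P : Matrix ι ι R := (of v)ᵀ
  have hP : P ∈ unitaryGroup ι R := mem_unitaryGroup_iff'.mpr <| by
    ext i j
    exact (horth i j).trans (one_apply ..).symm
  have hLP : L * P = P * diagonal lam := by
    ext a j
    rw [mul_diagonal, mul_comm (P a j)]
    exact congrFun (heig j) a
  exact ⟨P, hP, by rw [← hLP, mul_assoc, mem_unitaryGroup_iff.mp hP, mul_one]⟩

variable {𝕜 : Type*} [RCLike 𝕜] {A B : Matrix ι ι 𝕜}

theorem exists_unitary_star_mul_mul_eq_of_charpoly_eq (hA : A.IsHermitian) (hB : B.IsHermitian)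
    (hAB : A.charpoly = B.charpoly) : ∃ U ∈ unitaryGroup ι 𝕜, star U * A * U = B := by
  let V := hA.eigenvectorUnitary * star hB.eigenvectorUnitary
  refine ⟨V, V.2, ?_⟩
  rw [← Unitary.conjStarAlgAut_star_apply (S := 𝕜), star_mul, star_star,
    Unitary.conjStarAlgAut_mul_apply, hA.conjStarAlgAut_star_eigenvectorUnitary,
    (hA.eigenvalues_eq_eigenvalues_iff hB).mpr hAB, ← hB.spectral_theorem]

end UnitaryDiagonalization

section DiagonalCompression

variable {𝕜 m ι : Type*} [RCLike 𝕜] [Fintype m] [DecidableEq ι]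
  {W : Matrix m ι 𝕜} {a : m → ℝ} {b : ι → ℝ}

theorem star_dotProduct_diagonal_ofReal_mulVec [DecidableEq m] (a : m → ℝ) (x : m → 𝕜) :
    star x ⬝ᵥ (diagonal (fun l => (a l : 𝕜)) *ᵥ x) = ((∑ l, a l * ‖x l‖ ^ 2 : ℝ) : 𝕜) := by
  simp only [dotProduct, mulVec_diagonal, Pi.star_apply, RCLike.star_def,
    RCLike.ofReal_sum, RCLike.ofReal_mul, RCLike.ofReal_pow]
  exact Finset.sum_congr rfl fun l _ => by rw [mul_left_comm, RCLike.conj_mul]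

theorem sum_mul_norm_sq_mulVec [DecidableEq m] [Fintype ι]
    (hW : Wᴴ * diagonal (fun l => (a l : 𝕜)) * W = diagonal fun j => (b j : 𝕜)) (c : ι → 𝕜) :
    ∑ l, a l * ‖(W *ᵥ c) l‖ ^ 2 = ∑ j, b j * ‖c j‖ ^ 2 := by
  apply RCLike.ofReal_injective (K := 𝕜)
  rw [← star_dotProduct_diagonal_ofReal_mulVec, ← star_dotProduct_diagonal_ofReal_mulVec, ← hW,
    star_mulVec, ← dotProduct_mulVec, mulVec_mulVec, mulVec_mulVec, Matrix.mul_assoc]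

theorem sum_norm_sq_mulVec [Fintype ι] (hW : Wᴴ * W = 1) (c : ι → 𝕜) :
    ∑ l, ‖(W *ᵥ c) l‖ ^ 2 = ∑ j, ‖c j‖ ^ 2 := by
  classical
  simpa using sum_mul_norm_sq_mulVec (W := W) (a := 1) (b := 1) (by simpa using hW) c

theorem le_of_conjTranspose_mul_diagonal_mul_eq_diagonal [DecidableEq m] [Finite ι]
    (hW : Wᴴ * W = 1)
    (hab : Wᴴ * diagonal (fun l => (a l : 𝕜)) * W = diagonal fun j => (b j : 𝕜))
    {s : Finset ι} {t : Finset m} (hcard : t.card < s.card) {α β : ℝ}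
    (hα : ∀ l ∉ t, α ≤ a l) (hβ : ∀ j ∈ s, b j ≤ β) : α ≤ β := by
  have := Fintype.ofFinite ι
  obtain ⟨c, hc0, hcs, hct⟩ := exists_ne_zero_supported_mulVec_eq_zero W hcard
  have hpos : 0 < ∑ j, ‖c j‖ ^ 2 := by
    obtain ⟨j, hj⟩ := Function.ne_iff.mp hc0
    exact Finset.sum_pos' (fun _ _ => by positivity)
      ⟨j, Finset.mem_univ j, pow_pos (norm_pos_iff.mpr hj) 2⟩
  refine le_of_mul_le_mul_right ?_ hpos
  calc α * ∑ j, ‖c j‖ ^ 2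
      = ∑ l, α * ‖(W *ᵥ c) l‖ ^ 2 := by rw [← sum_norm_sq_mulVec hW c, Finset.mul_sum]
    _ ≤ ∑ l, a l * ‖(W *ᵥ c) l‖ ^ 2 := Finset.sum_le_sum fun l _ => by
        by_cases hl : l ∈ t
        · simp [hct l hl]
        · gcongr
          exact hα l hl
    _ = ∑ j, b j * ‖c j‖ ^ 2 := sum_mul_norm_sq_mulVec hab c
    _ ≤ ∑ j, β * ‖c j‖ ^ 2 := Finset.sum_le_sum fun j _ => by
        by_cases hj : j ∈ s
        · gcongr
          exact hβ j hj
        · simp [hcs j hj]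
    _ = β * ∑ j, ‖c j‖ ^ 2 := (Finset.mul_sum ..).symm

end DiagonalCompression

section Compression

variable {𝕜 : Type*} [RCLike 𝕜] {n k : ℕ} {lam : Fin n → ℝ} {d : Fin k → ℝ}

theorem eigenvalue_le_diagonal_compression_eigenvalue (hk : k ≤ n) (hlam : Monotone lam)
    (hd : Monotone d)
    {W : Matrix (Fin n) (Fin k) 𝕜} (hW : Wᴴ * W = 1)
    (hWd : Wᴴ * diagonal (fun l => (lam l : 𝕜)) * W = diagonal fun j => (d j : 𝕜)) (i : Fin k) :
    lam (Fin.castLE hk i) ≤ d i :=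
  le_of_conjTranspose_mul_diagonal_mul_eq_diagonal hW hWd
    (s := Finset.Iic i) (t := Finset.Iio (Fin.castLE hk i)) (by simp)
    (fun _ hl => hlam (by simpa using hl)) (fun _ hj => hd (Finset.mem_Iic.mp hj))

theorem eigenvalue_le_compression_eigenvalue (hk : k ≤ n) (hlam : Monotone lam) (hd : Monotone d)
    {L : Matrix (Fin n) (Fin n) 𝕜} {v : Fin n → Fin n → 𝕜}
    (heig : ∀ i, L *ᵥ v i = (lam i : 𝕜) • v i)
    (horth : ∀ i j, star (v i) ⬝ᵥ v j = if i = j then 1 else 0)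
    {A : Matrix (Fin n) (Fin k) 𝕜} (hA : Aᴴ * A = 1)
    (hchar : (Aᴴ * L * A).charpoly = ∏ i, (X - C (d i : 𝕜))) (i : Fin k) :
    lam (Fin.castLE hk i) ≤ d i := by
  obtain ⟨P, hP, hLP⟩ := exists_unitary_eq_mul_diagonal_mul_star heig horth
  have hL : L.IsHermitian := by
    rw [hLP]
    exact isHermitian_mul_mul_conjTranspose P (isHermitian_diagonal_ofReal lam)
  obtain ⟨U, hU, hUd⟩ := exists_unitary_star_mul_mul_eq_of_charpoly_eq
    (isHermitian_conjTranspose_mul_mul A hL) (isHermitian_diagonal_ofReal d)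
    (hchar.trans (charpoly_diagonal _).symm)
  refine eigenvalue_le_diagonal_compression_eigenvalue (W := Pᴴ * A * U) hk hlam hd ?_ ?_ i
  · calc (Pᴴ * A * U)ᴴ * (Pᴴ * A * U) = Uᴴ * (Aᴴ * (P * Pᴴ) * A) * U := by
          simp only [conjTranspose_mul, conjTranspose_conjTranspose, Matrix.mul_assoc]
      _ = 1 := by
          rw [← star_eq_conjTranspose P, mem_unitaryGroup_iff.mp hP, Matrix.mul_one, hA,
            Matrix.mul_one]
          exact mem_unitaryGroup_iff'.mp hU
  · calc (Pᴴ * A * U)ᴴ * diagonal (fun l => (lam l : 𝕜)) * (Pᴴ * A * U)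
        = Uᴴ * (Aᴴ * (P * diagonal (fun l => (lam l : 𝕜)) * Pᴴ) * A) * U := by
          simp only [conjTranspose_mul, conjTranspose_conjTranspose, Matrix.mul_assoc]
      _ = diagonal fun j => (d j : 𝕜) := by
          rw [← star_eq_conjTranspose P, ← hLP]
          exact hUd

end Compression

theorem compression_eigenvalues_eq_of_trace_eq_general {𝕜 : Type*} [RCLike 𝕜]
    {n k : ℕ} (hk : k ≤ n) (L : Matrix (Fin n) (Fin n) 𝕜)
    (lam : Fin n → ℝ) (hmono : Monotone lam)
    (v : Fin n → Fin n → 𝕜)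
    (heig : ∀ i, L *ᵥ v i = (lam i : 𝕜) • v i)
    (horth : ∀ i j, star (v i) ⬝ᵥ v j = if i = j then 1 else 0)
    (A : Matrix (Fin n) (Fin k) 𝕜) (hA : Aᴴ * A = 1)
    (htr : (Aᴴ * L * A).trace = ∑ j : Fin k, (lam (Fin.castLE hk j) : 𝕜))
    (d : Fin k → ℝ) (hd_mono : Monotone d)
    (hd : (Aᴴ * L * A).charpoly = ∏ i : Fin k, (X - C (d i : 𝕜))) :
    ∀ i : Fin k, d i = lam (Fin.castLE hk i) := by
  have hle : ∀ i ∈ Finset.univ, lam (Fin.castLE hk i) ≤ d i := fun i _ =>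
    eigenvalue_le_compression_eigenvalue hk hmono hd_mono heig horth hA hd i
  have hsum : ∑ i, lam (Fin.castLE hk i) = ∑ i, d i := by
    apply RCLike.ofReal_injective (K := 𝕜)
    rw [RCLike.ofReal_sum, RCLike.ofReal_sum, ← htr, trace_eq_sum_of_charpoly_eq_prod hd]
  exact fun i => ((Finset.sum_eq_sum_iff_of_le hle).mp hsum i (Finset.mem_univ i)).symm

/-- If `A` has orthonormal columns, `Tr(Aᵀ L A) = λ_1 + ⋯ + λ_k`, and
`d_1 ≤ ⋯ ≤ d_k` are the eigenvalues (with multiplicity) of `Aᵀ L A`, then `d_i = λ_i`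
for every `i`. -/
theorem compression_eigenvalues_eq_of_trace_eq
    {n k : ℕ} (hk : k < n) (hk0 : 0 < k)
    (L : Matrix (Fin n) (Fin n) ℝ) (hL : L.IsSymm)
    (lam : Fin n → ℝ) (hmono : Monotone lam)
    (v : Fin n → Fin n → ℝ)
    (heig : ∀ i, L.mulVec (v i) = lam i • v i)
    (horth : ∀ i j, v i ⬝ᵥ v j = if i = j then (1 : ℝ) else 0)
    (hgap : lam ⟨k - 1, by omega⟩ < lam ⟨k, hk⟩)
    (A : Matrix (Fin n) (Fin k) ℝ) (hA : Aᵀ * A = 1)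
    (htr : Matrix.trace (Aᵀ * L * A) = ∑ j : Fin k, lam (Fin.castLE hk.le j))
    (d : Fin k → ℝ) (hd_mono : Monotone d)
    (hd : (Aᵀ * L * A).charpoly = ∏ i : Fin k, (X - C (d i))) :
    ∀ i : Fin k, d i = lam (Fin.castLE hk.le i) :=
  compression_eigenvalues_eq_of_trace_eq_general hk.le L lam hmono v heig horth A hA htr d
    hd_mono hd
end
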